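/- arXiv:1411.0510 — 2 statements merged into one kernel-verified Lean document; each statement's English description precedes it below -/
import Mathlib

section
/- For reduced words u and v, u is left-absorbed by v if and only if the non-splitting reduct [u·v] equals v (up to permutation). -/
variable {V : Type*} [DecidableEq V] [Fintype V]

/-- A letter is a nonempty connected subset of the graph `G`
(connectedness of the induced subgraph includes nonemptiness). -/
def IsLetter (G : SimpleGraph V) (s : Finset V) : Prop :=
  (G.induce (↑s : Set V)).Connected

/-- The type of letters of `G`. -/
def Letter (G : SimpleGraph V) := {s : Finset V // IsLetter G s}

/-- A word is a finite sequence of letters. -/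
abbrev Word (G : SimpleGraph V) := List (Letter G)

/-- Two letters commute iff their union is not a letter (is disconnected). -/
def LCommute (G : SimpleGraph V) (s t : Letter G) : Prop :=
  ¬ IsLetter G (s.1 ∪ t.1)

/-- Two words commute if their letters pairwise commute. -/
def WCommute (G : SimpleGraph V) (u v : Word G) : Prop :=
  ∀ s ∈ u, ∀ t ∈ v, LCommute G s t

/-- One swap of two adjacent commuting letters. -/
def LSwapStep (G : SimpleGraph V) (w w' : Word G) : Prop :=
  ∃ (a b : Word G) (s t : Letter G), LCommute G s t ∧
    w = a ++ s :: t :: b ∧ w' = a ++ t :: s :: b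

/-- Equivalence (`≈`) of words: sequences of swaps of adjacent commuting letters. -/
def WEquiv (G : SimpleGraph V) : Word G → Word G → Prop :=
  Relation.ReflTransGen (LSwapStep G)

/-- A word is reduced if there is no pair of comparable letters such that the
smaller one commutes with all letters strictly in between. -/
def WIsReduced (G : SimpleGraph V) (w : Word G) : Prop :=
  ¬ ∃ (a b c : Word G) (s t : Letter G),
      w = a ++ s :: (b ++ t :: c) ∧
      ((s.1 ⊆ t.1 ∧ ∀ r ∈ b, LCommute G s r) ∨
       (t.1 ⊆ s.1 ∧ ∀ r ∈ b, LCommute G t r))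

/-- A splitting of a letter `s`: a (possibly empty) word whose letters are
proper subsets of `s`. -/
def IsSplitting (G : SimpleGraph V) (x : Word G) (s : Letter G) : Prop :=
  ∀ t ∈ x, t.1 ⊂ s.1

/-- `SplitStep G u v`: `u` is obtained from `v` by replacing one occurrence of a
letter by a splitting of it. -/
def SplitStep (G : SimpleGraph V) (u v : Word G) : Prop :=
  ∃ (a b x : Word G) (s : Letter G),
    v = a ++ s :: b ∧ IsSplitting G x s ∧ u = a ++ x ++ b

/-- One step of the splitting order up to equivalence. -/
def PrecStep (G : SimpleGraph V) (u v : Word G) : Prop :=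
  ∃ u' v', WEquiv G v v' ∧ SplitStep G u' v' ∧ WEquiv G u u'

/-- The splitting order `≺` on words. -/
def WPrec (G : SimpleGraph V) : Word G → Word G → Prop :=
  Relation.TransGen (PrecStep G)

/-- `u ≼ v` : `u ≺ v` or `u ≈ v`. -/
def WPreceq (G : SimpleGraph V) (u v : Word G) : Prop :=
  WPrec G u v ∨ WEquiv G u v

/-- Absorption: if `s ⊆ t`, replace a subword `s·t` (or `t·s`) by `t`. -/
def AbsorbStep (G : SimpleGraph V) (w w' : Word G) : Prop :=
  ∃ (a b : Word G) (s t : Letter G), s.1 ⊆ t.1 ∧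
    (w = a ++ s :: t :: b ∨ w = a ++ t :: s :: b) ∧ w' = a ++ t :: b

/-- A non-splitting reduction step: Commutation or Absorption. -/
def NSStep (G : SimpleGraph V) (w w' : Word G) : Prop :=
  LSwapStep G w w' ∨ AbsorbStep G w w'

/-- `NSRed G u v`: `v` is a non-splitting reduction of `u`, i.e. a reduced word
obtained from `u` by Commutation and Absorption steps only. -/
def NSRed (G : SimpleGraph V) (u v : Word G) : Prop :=
  Relation.ReflTransGen (NSStep G) u v ∧ WIsReduced G v

/-- The letter `t` is left-absorbed by the word `w`: `t` is contained in some
letter of `w` and commutes with all earlier letters. -/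
def LetterLeftAbsorbed (G : SimpleGraph V) (t : Letter G) (w : Word G) : Prop :=
  ∃ (a b : Word G) (s : Letter G), w = a ++ s :: b ∧ t.1 ⊆ s.1 ∧ ∀ r ∈ a, LCommute G t r

/-- The letter `t` is right-absorbed by the word `w`. -/
def LetterRightAbsorbed (G : SimpleGraph V) (t : Letter G) (w : Word G) : Prop :=
  ∃ (a b : Word G) (s : Letter G), w = a ++ s :: b ∧ t.1 ⊆ s.1 ∧ ∀ r ∈ b, LCommute G t r

/-- The letter `t` is properly left-absorbed by the word `w`. -/
def LetterProperLeftAbsorbed (G : SimpleGraph V) (t : Letter G) (w : Word G) : Prop :=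
  ∃ (a b : Word G) (s : Letter G), w = a ++ s :: b ∧ t.1 ⊂ s.1 ∧ ∀ r ∈ a, LCommute G t r

/-- The letter `t` is properly right-absorbed by the word `w`. -/
def LetterProperRightAbsorbed (G : SimpleGraph V) (t : Letter G) (w : Word G) : Prop :=
  ∃ (a b : Word G) (s : Letter G), w = a ++ s :: b ∧ t.1 ⊂ s.1 ∧ ∀ r ∈ b, LCommute G t r

/-- A word `u` is left-absorbed by `w` if each of its letters is. -/
def LeftAbsorbed (G : SimpleGraph V) (u w : Word G) : Prop :=
  ∀ t ∈ u, LetterLeftAbsorbed G t w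

/-- A word `u` is right-absorbed by `w` if each of its letters is. -/
def RightAbsorbed (G : SimpleGraph V) (u w : Word G) : Prop :=
  ∀ t ∈ u, LetterRightAbsorbed G t w

/-- A word `u` is properly left-absorbed by `w` if each of its letters is. -/
def ProperLeftAbsorbed (G : SimpleGraph V) (u w : Word G) : Prop :=
  ∀ t ∈ u, LetterProperLeftAbsorbed G t w

/-- A word `u` is properly right-absorbed by `w` if each of its letters is. -/
def ProperRightAbsorbed (G : SimpleGraph V) (u w : Word G) : Prop :=
  ∀ t ∈ u, LetterProperRightAbsorbed G t w

/-- A commuting word: its letters pairwise commute. -/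
def IsCommuting (G : SimpleGraph V) (u : Word G) : Prop :=
  List.Pairwise (LCommute G) u

/-- The letter `s` is an end of the word `u` if `u ≈ v·s` for some `v`. -/
def IsEnd (G : SimpleGraph V) (s : Letter G) (u : Word G) : Prop :=
  ∃ v, WEquiv G u (v ++ [s])

/-- `t` is the final segment of `u`: the commuting word consisting of all ends of `u`. -/
def IsFinalSegment (G : SimpleGraph V) (t u : Word G) : Prop :=
  IsCommuting G t ∧ ∀ s, s ∈ t ↔ IsEnd G s u

/-!
Call a map from the positions of a word `w` to the positions of a word `w'` a homomorphism if it
sends each letter into a letter containing it and never reverses the order of two letters which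
do not commute. Swaps, absorptions and inclusions of subwords are homomorphisms, so if `u ++ v`
reduces to `v` then each letter `t` of `u` yields a homomorphism from `t :: v` to `v`. A reduced
word has no endomorphism besides the identity: everything between two letters with the same image
has that image as well, so a letter whose image carries the same set is alone in its fibre, and
the claim follows by going through the letters from the larger sets to the smaller ones. Hence
the homomorphism `t :: v → v` is the identity on `v`, and the letter to which it sends `t`
absorbs `t`.
-/

section

variable {α : Type*} {G : SimpleGraph α}

theorem Letter.nonempty (s : Letter G) : s.1.Nonempty :=
  let ⟨x⟩ := s.2.nonempty
  ⟨x.1, x.2⟩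

theorem exists_eq_append_cons {β : Type*} (w : List β) (j : Fin w.length) :
    ∃ a b, w = a ++ w.get j :: b ∧ ∀ r ∈ a, ∃ k, k < j ∧ w.get k = r := by
  refine ⟨w.take j, w.drop (j + 1), by simp, fun r hr => ?_⟩
  obtain ⟨k, hk, rfl⟩ := List.mem_take_iff_getElem.1 hr
  exact ⟨⟨k, by omega⟩, Fin.lt_def.2 (by dsimp only; omega), rfl⟩

theorem exists_eq_append_cons_append_cons {β : Type*} {w : List β} {i j : Fin w.length}
    (hij : i < j) : ∃ a b c, w = a ++ w.get i :: (b ++ w.get j :: c) ∧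
      ∀ r ∈ b, ∃ k, i < k ∧ k < j ∧ w.get k = r := by
  refine ⟨w.take i, (w.take j).drop (i + 1), w.drop (j + 1), ?_, fun r hr => ?_⟩
  · have hdrop : (w.take j).drop (i + 1) ++ w.drop j = w.drop (i + 1) := by
      rw [← List.drop_append_of_le_length (by rw [List.length_take]; omega), List.take_append_drop]
    rw [List.get_eq_getElem, List.get_eq_getElem, List.getElem_cons_drop, hdrop,
      List.getElem_cons_drop, List.take_append_drop]
  · obtain ⟨k, hk, rfl⟩ := List.mem_iff_getElem.1 hr
    rw [List.length_drop, List.length_take] at hk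
    refine ⟨⟨i + 1 + k, by omega⟩, ?_, ?_, by simp⟩
    · exact Fin.lt_def.2 (by dsimp only; omega)
    · exact Fin.lt_def.2 (by dsimp only; omega)

variable [DecidableEq α]

theorem LCommute.symm {s t : Letter G} (h : LCommute G s t) : LCommute G t s := by
  unfold LCommute at *
  rwa [Finset.union_comm]

theorem LCommute.mono_left {r s t : Letter G} (hrs : r.1 ⊆ s.1) (h : LCommute G s t) :
    LCommute G r t := by
  intro hrt
  obtain ⟨x, hx⟩ := r.nonempty
  have hconn := SimpleGraph.induce_union_connected (G := G) s.2.preconnected hrt.preconnected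
    ⟨x, hrs hx, by simp [hx]⟩
  rw [← Finset.coe_union, ← Finset.union_assoc, Finset.union_eq_left.2 hrs] at hconn
  exact h hconn

theorem LCommute.mono {r s t q : Letter G} (hrs : r.1 ⊆ s.1) (hqt : q.1 ⊆ t.1)
    (h : LCommute G s t) : LCommute G r q :=
  ((h.mono_left hrs).symm.mono_left hqt).symm

theorem not_lCommute_of_subset {s t : Letter G} (hst : s.1 ⊆ t.1) : ¬ LCommute G s t := by
  rw [LCommute, not_not, Finset.union_eq_right.2 hst]
  exact t.2

theorem WIsReduced.exists_not_lCommute_between {w : Word G} (hw : WIsReduced G w)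
    {i j : Fin w.length} (hne : i ≠ j) (hij : (w.get i).1 ⊆ (w.get j).1) :
    ∃ k, (i < k ∧ k < j ∨ j < k ∧ k < i) ∧ ¬ LCommute G (w.get i) (w.get k) := by
  by_contra! hcomm
  rcases lt_or_gt_of_ne hne with hlt | hlt
  · obtain ⟨a, b, c, hsplit, hb⟩ := exists_eq_append_cons_append_cons hlt
    refine hw ⟨a, b, c, _, _, hsplit, .inl ⟨hij, fun r hr => ?_⟩⟩
    obtain ⟨k, hik, hkj, rfl⟩ := hb r hr
    exact hcomm k (.inl ⟨hik, hkj⟩)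
  · obtain ⟨a, b, c, hsplit, hb⟩ := exists_eq_append_cons_append_cons hlt
    refine hw ⟨a, b, c, _, _, hsplit, .inr ⟨hij, fun r hr => ?_⟩⟩
    obtain ⟨k, hjk, hki, rfl⟩ := hb r hr
    exact hcomm k (.inr ⟨hjk, hki⟩)

theorem NSStep.cons (s : Letter G) {w w' : Word G} (h : NSStep G w w') :
    NSStep G (s :: w) (s :: w') := by
  rcases h with ⟨a, b, p, q, hpq, rfl, rfl⟩ | ⟨a, b, p, q, hpq, rfl | rfl, rfl⟩
  · exact .inl ⟨s :: a, b, p, q, hpq, rfl, rfl⟩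
  · exact .inr ⟨s :: a, b, p, q, hpq, .inl rfl, rfl⟩
  · exact .inr ⟨s :: a, b, p, q, hpq, .inr rfl, rfl⟩

theorem reduces_cons (s : Letter G) {w w' : Word G}
    (h : Relation.ReflTransGen (NSStep G) w w') :
    Relation.ReflTransGen (NSStep G) (s :: w) (s :: w') :=
  Relation.ReflTransGen.lift (s :: ·) (fun _ _ => NSStep.cons s) _ _ h

theorem LetterLeftAbsorbed.reduces {t : Letter G} {v : Word G}
    (h : LetterLeftAbsorbed G t v) : Relation.ReflTransGen (NSStep G) (t :: v) v := by
  obtain ⟨a, b, s, rfl, hts, ha⟩ := h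
  induction a with
  | nil => exact .single (.inr ⟨[], b, t, s, hts, .inl rfl, rfl⟩)
  | cons r a ih =>
    obtain ⟨hr, ha⟩ := List.forall_mem_cons.1 ha
    exact .head (.inl ⟨[], a ++ s :: b, t, r, hr, rfl, rfl⟩) (reduces_cons r (ih ha))

theorem LeftAbsorbed.reduces {u v : Word G} (h : LeftAbsorbed G u v) :
    Relation.ReflTransGen (NSStep G) (u ++ v) v := by
  induction u with
  | nil => exact .refl
  | cons t u ih =>
    obtain ⟨ht, hu⟩ := List.forall_mem_cons.1 h
    exact (reduces_cons t (ih hu)).trans ht.reduces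

theorem WEquiv.reduces {w w' : Word G} (h : WEquiv G w w') :
    Relation.ReflTransGen (NSStep G) w w' :=
  Relation.ReflTransGen.mono (fun _ _ => .inl) _ _ h

/-- A homomorphism of words: a map between the positions of two words which sends each letter into
a letter containing it and is monotone on pairs of letters which do not commute. -/
structure IsWordHom (w w' : Word G) (φ : Fin w.length → Fin w'.length) : Prop where
  subset : ∀ i, (w.get i).1 ⊆ (w'.get (φ i)).1
  mono : ∀ ⦃i j⦄, i < j → ¬ LCommute G (w.get i) (w.get j) → φ i ≤ φ j

/-- `WRefines w w'`: there is a homomorphism from `w` to `w'`. Up to swaps, this says that `w`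
arises from `w'` by replacing each letter by a word in letters contained in it. -/
def WRefines (w w' : Word G) : Prop :=
  ∃ φ, IsWordHom w w' φ

theorem isWordHom_cons {s : Letter G} {w w' : Word G}
    {φ : Fin w.length → Fin w'.length} {j : Fin w'.length} :
    IsWordHom (s :: w) w' (Fin.cons j φ : Fin (w.length + 1) → Fin w'.length) ↔
      s.1 ⊆ (w'.get j).1 ∧ (∀ i, ¬ LCommute G s (w.get i) → j ≤ φ i) ∧ IsWordHom w w' φ := by
  constructor
  · intro h
    exact ⟨h.subset 0, fun i => h.mono (Fin.succ_pos i), fun i => h.subset i.succ,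
      fun i k hik => h.mono (Fin.succ_lt_succ_iff.2 hik)⟩
  · rintro ⟨hs, hj, h⟩
    refine ⟨Fin.cases hs h.subset, Fin.cases (Fin.cases ?_ ?_) fun i => Fin.cases ?_ ?_⟩
    · exact fun hlt => absurd hlt (lt_irrefl _)
    · exact fun k _ => hj k
    · exact fun hlt => absurd hlt (Fin.not_lt_zero _)
    · exact fun k hik => h.mono (Fin.succ_lt_succ_iff.1 hik)

theorem IsWordHom.comp {w w' w'' : Word G} {φ : Fin w.length → Fin w'.length}
    {ψ : Fin w'.length → Fin w''.length} (hψ : IsWordHom w' w'' ψ) (hφ : IsWordHom w w' φ) :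
    IsWordHom w w'' (ψ ∘ φ) where
  subset i := (hφ.subset i).trans (hψ.subset (φ i))
  mono i j hij hcomm := by
    rcases (hφ.mono hij hcomm).eq_or_lt with heq | hlt
    · exact (congrArg ψ heq).le
    · exact hψ.mono hlt fun h => hcomm (h.mono (hφ.subset i) (hφ.subset j))

theorem isWordHom_id (w : Word G) : IsWordHom w w id :=
  ⟨fun _ => subset_rfl, fun _ _ hij _ => hij.le⟩

theorem isWordHom_succ (s : Letter G) (w : Word G) : IsWordHom w (s :: w) Fin.succ :=
  ⟨fun _ => subset_rfl, fun _ _ hij _ => (Fin.succ_lt_succ_iff.2 hij).le⟩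

theorem WRefines.trans {w w' w'' : Word G} (h : WRefines w w') (h' : WRefines w' w'') :
    WRefines w w'' :=
  let ⟨φ, hφ⟩ := h
  let ⟨ψ, hψ⟩ := h'
  ⟨ψ ∘ φ, hψ.comp hφ⟩

theorem WRefines.cons_cons {w w' : Word G} (h : WRefines w w') (s : Letter G) :
    WRefines (s :: w) (s :: w') :=
  let ⟨_, hφ⟩ := h
  ⟨_, isWordHom_cons.2 ⟨subset_rfl, fun _ _ => Fin.zero_le _, (isWordHom_succ s w').comp hφ⟩⟩

theorem WRefines.append_left {w w' : Word G} (h : WRefines w w') (a : Word G) :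
    WRefines (a ++ w) (a ++ w') := by
  induction a with
  | nil => exact h
  | cons s a ih => exact ih.cons_cons s

theorem wRefines_of_sublist {w w' : Word G} (h : w.Sublist w') : WRefines w w' := by
  obtain ⟨φ, hφ⟩ := List.sublist_iff_exists_fin_orderEmbedding_get_eq.1 h
  exact ⟨φ, fun i => (congrArg Subtype.val (hφ i)).subset, fun _ _ hij _ => (φ.lt_iff_lt.2 hij).le⟩

theorem wRefines_swap {s t : Letter G} (hst : LCommute G s t) (w : Word G) :
    WRefines (s :: t :: w) (t :: s :: w) := by
  have hw := (isWordHom_succ t (s :: w)).comp (isWordHom_succ s w)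
  have htw := isWordHom_cons.2 ⟨subset_rfl (a := t.1), fun _ _ => Fin.zero_le _, hw⟩
  refine ⟨_, isWordHom_cons (j := Fin.succ 0) |>.2 ⟨subset_rfl, Fin.cases ?_ ?_, htw⟩⟩
  · exact fun h => absurd hst h
  · exact fun i _ => Fin.succ_le_succ_iff.2 (Fin.zero_le i.succ)

theorem wRefines_absorb_left {s t : Letter G} (hst : s.1 ⊆ t.1) (w : Word G) :
    WRefines (s :: t :: w) (t :: w) :=
  ⟨_, isWordHom_cons (j := 0) |>.2 ⟨hst, fun _ _ => Fin.zero_le _, isWordHom_id (t :: w)⟩⟩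

theorem wRefines_absorb_right {s t : Letter G} (hst : s.1 ⊆ t.1) (w : Word G) :
    WRefines (t :: s :: w) (t :: w) :=
  ⟨_, isWordHom_cons (j := 0) |>.2 ⟨subset_rfl, fun _ _ => Fin.zero_le _,
    isWordHom_cons (j := 0) |>.2 ⟨hst, fun _ _ => Fin.zero_le _, isWordHom_succ t w⟩⟩⟩

theorem NSStep.wRefines {w w' : Word G} (h : NSStep G w w') : WRefines w w' := by
  rcases h with ⟨a, b, s, t, hst, rfl, rfl⟩ | ⟨a, b, s, t, hst, rfl | rfl, rfl⟩
  · exact (wRefines_swap hst b).append_left a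
  · exact (wRefines_absorb_left hst b).append_left a
  · exact (wRefines_absorb_right hst b).append_left a

theorem wRefines_of_reduces {w w' : Word G} (h : Relation.ReflTransGen (NSStep G) w w') :
    WRefines w w' := by
  induction h with
  | refl => exact ⟨id, isWordHom_id w⟩
  | tail _ hstep ih => exact ih.trans hstep.wRefines

theorem IsWordHom.eq_of_apply_eq {w w' : Word G} {φ : Fin w.length → Fin w'.length}
    (hφ : IsWordHom w w' φ) (hw : WIsReduced G w) {i j : Fin w.length} (hij : φ i = φ j)
    (hj : (w'.get (φ j)).1 ⊆ (w.get j).1) : i = j := by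
  induction hd : ((i : ℤ) - j).natAbs using Nat.strong_induction_on generalizing i with
  | _ d ih =>
  by_contra hne
  have hsub : (w.get i).1 ⊆ (w.get j).1 := (hφ.subset i).trans (hij ▸ hj)
  obtain ⟨k, hk, hik⟩ := hw.exists_not_lCommute_between hne hsub
  have hjk : ¬ LCommute G (w.get j) (w.get k) := fun h => hik (h.mono_left hsub)
  have hkj : φ k = φ j := by
    rcases hk with ⟨h₁, h₂⟩ | ⟨h₁, h₂⟩
    · exact le_antisymm (hφ.mono h₂ (mt .symm hjk)) (hij ▸ hφ.mono h₁ hik)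
    · exact le_antisymm (hij ▸ hφ.mono h₂ (mt .symm hik)) (hφ.mono h₁ hjk)
  have heq : k = j := ih _ (by omega) hkj rfl
  omega

theorem IsWordHom.apply_eq_self_of_get_eq {w : Word G} {φ : Fin w.length → Fin w.length}
    (hφ : IsWordHom w w φ) (hw : WIsReduced G w) {r : Letter G}
    (hr : ∀ k, w.get k = r → w.get (φ k) = r) {i : Fin w.length} (hi : w.get i = r) :
    φ i = i := by
  let f : {k // w.get k = r} → {k // w.get k = r} := fun k => ⟨φ k, hr k k.2⟩
  have hf : StrictMono f := by
    rintro ⟨k, hk⟩ ⟨l, hl⟩ (hkl : k < l)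
    have hle : φ k ≤ φ l := hφ.mono hkl (not_lCommute_of_subset (by rw [hk, hl]))
    have hne : φ k ≠ φ l := fun h => hkl.ne (hφ.eq_of_apply_eq hw h (by rw [hr l hl, hl]))
    exact hle.lt_of_ne hne
  exact congrArg Subtype.val (le_antisymm (hf.apply_le (x := ⟨i, hi⟩)) hf.le_apply)

theorem IsWordHom.eq_id {w : Word G} {φ : Fin w.length → Fin w.length}
    (hφ : IsWordHom w w φ) (hw : WIsReduced G w) : φ = id := by
  by_contra! hne
  obtain ⟨i, hi, hmax⟩ := (Set.toFinite {i | φ i ≠ i}).exists_maximalFor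
    (fun i => (w.get i).1) _ (Function.ne_iff.1 hne)
  have hfixed (k) (hk : (w.get i).1 ⊂ (w.get k).1) : φ k = k :=
    of_not_not fun h => hk.2 (hmax h hk.1)
  refine hi (hφ.apply_eq_self_of_get_eq hw (fun k hk => ?_) rfl)
  by_contra hlabel
  have hproper : (w.get i).1 ⊂ (w.get (φ k)).1 :=
    hk ▸ (hφ.subset k).ssubset_of_ne fun h => hlabel (Subtype.ext (h.symm.trans (by rw [hk])))
  have hφk : φ (φ k) = φ k := hfixed _ hproper
  have hk_fixed : k = φ k := hφ.eq_of_apply_eq hw hφk.symm (by rw [hφk])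
  exact hlabel (hk_fixed ▸ hk)

theorem WRefines.letterLeftAbsorbed {t : Letter G} {v : Word G} (h : WRefines (t :: v) v)
    (hv : WIsReduced G v) : LetterLeftAbsorbed G t v := by
  obtain ⟨φ, hφ⟩ := h
  rw [← Fin.cons_self_tail φ, isWordHom_cons] at hφ
  obtain ⟨hsub, hle, htail⟩ := hφ
  rw [htail.eq_id hv] at hle
  obtain ⟨a, b, hsplit, ha⟩ := exists_eq_append_cons v (φ 0)
  refine ⟨a, b, _, hsplit, hsub, fun r hr => ?_⟩
  obtain ⟨k, hk, rfl⟩ := ha r hr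
  exact of_not_not fun hcomm => hk.not_ge (hle k hcomm)

theorem LeftAbsorbed.of_reduces {u v : Word G} (hv : WIsReduced G v)
    (h : Relation.ReflTransGen (NSStep G) (u ++ v) v) : LeftAbsorbed G u v := by
  intro t ht
  have hsub : (t :: v).Sublist (u ++ v) := (List.singleton_sublist.2 ht).append (.refl v)
  exact ((wRefines_of_sublist hsub).trans (wRefines_of_reduces h)).letterLeftAbsorbed hv

end

theorem leftAbsorbed_iff_reduct_eq_general {α : Type*} [DecidableEq α] (G : SimpleGraph α)
    (u v : Word G) (hv : WIsReduced G v) :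
    LeftAbsorbed G u v ↔ ∃ r, NSRed G (u ++ v) r ∧ WEquiv G r v := by
  constructor
  · intro h
    exact ⟨v, ⟨h.reduces, hv⟩, .refl⟩
  · rintro ⟨r, ⟨hr, -⟩, hrv⟩
    exact .of_reduces hv (hr.trans hrv.reduces)

/-- For reduced words `u` and `v`: `u` is left-absorbed by `v` iff `[u·v] = v`
(up to permutation). -/
theorem leftAbsorbed_iff_reduct_eq (G : SimpleGraph V) (u v : Word G)
    (hu : WIsReduced G u) (hv : WIsReduced G v) :
    LeftAbsorbed G u v ↔ ∃ r, NSRed G (u ++ v) r ∧ WEquiv G r v :=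
  leftAbsorbed_iff_reduct_eq_general G u v hv
end

section
/- Symmetric Decomposition: Given reduced words u and v, there exist decompositions, unique up to permutation, u ≈ u_1·u'·w and v ≈ w·v'·v_1 such that: w is a commuting word; u' is properly left-absorbed by v_1; v' is properly right-absorbed by u_1; the words u', w, v' pairwise commute; and u_1·w·v_1 is reduced. Moreover the non-splitting reduct satisfies [u·v] ≈ u_1·w·v_1. -/
variable {V : Type*} [DecidableEq V] [Fintype V]

/-!
Reading `u` backwards, the two words face each other at their starts. As long as a start of one is
properly absorbed by the other, peel it off; it joins `u'` or `v'`. A letter peeled off from `u` is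
absorbed even by `v₁`: the letters of `w` and `v'` are absorbed by the rest of `u`, so none of them
lies above it, `u` being reduced. When nothing is left to peel off, the common starts make up `w`,
and the remaining words `u₁` and `v₁` no longer interact. Conversely, `u' · w` is the largest final
segment of `u` absorbed by `v`, and `u'` is its properly absorbed part, which gives uniqueness.

The reduct is unique because one can tell which letters of a word survive without reference to a
sequence of reductions, in a way that is invariant under Commutation and Absorption and keeps every
letter of a reduced word.
-/

section Traces

variable {A : Type*} {C R : A → A → Prop} {s t : A} {P Q P' Q' : List A}

/-- Trace equivalence: equality of lists up to swaps of adjacent elements related by `C`. -/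
inductive TraceEq (C : A → A → Prop) : List A → List A → Prop
  | refl (P : List A) : TraceEq C P P
  | cons (s : A) {P Q : List A} : TraceEq C P Q → TraceEq C (s :: P) (s :: Q)
  | swap {s t : A} (P : List A) : C s t → TraceEq C (s :: t :: P) (t :: s :: P)
  | trans {P P' Q : List A} : TraceEq C P P' → TraceEq C P' Q → TraceEq C P Q

namespace TraceEq

theorem symm [Std.Symm C] (h : TraceEq C P Q) : TraceEq C Q P := by
  induction h with
  | refl P => exact .refl P
  | cons s _ ih => exact .cons s ih
  | swap P h => exact .swap P (symm_of C h)
  | trans _ _ ih ih' => exact ih'.trans ih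

theorem append_left (P : List A) (h : TraceEq C Q Q') : TraceEq C (P ++ Q) (P ++ Q') := by
  induction P with
  | nil => exact h
  | cons s P ih => exact .cons s ih

theorem append_right (Q : List A) (h : TraceEq C P P') : TraceEq C (P ++ Q) (P' ++ Q) := by
  induction h with
  | refl P => exact .refl _
  | cons s _ ih => exact .cons s ih
  | swap P h => exact .swap _ h
  | trans _ _ ih ih' => exact ih.trans ih'

theorem reverse [Std.Symm C] (h : TraceEq C P Q) : TraceEq C P.reverse Q.reverse := by
  induction h with
  | refl P => exact .refl _
  | cons s _ ih => simpa using ih.append_right [s]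
  | swap P h => simpa using (TraceEq.swap [] (symm_of C h)).append_left P.reverse
  | trans _ _ ih ih' => exact ih.trans ih'

theorem perm (h : TraceEq C P Q) : P.Perm Q := by
  induction h with
  | refl P => exact .refl P
  | cons s _ ih => exact .cons s ih
  | swap P _ => exact .swap _ _ P
  | trans _ _ ih ih' => exact ih.trans ih'

theorem filter (p : A → Bool) (h : TraceEq C P Q) : TraceEq C (P.filter p) (Q.filter p) := by
  induction h with
  | refl P => exact .refl _
  | cons s _ ih => cases hs : p s <;> simp [hs, ih, TraceEq.cons]
  | @swap s t P h =>
    cases hs : p s <;> cases ht : p t <;> simp [hs, ht, h, TraceEq.refl, TraceEq.swap]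
  | trans _ _ ih ih' => exact ih.trans ih'

theorem cons_append_of_comm (h : ∀ r ∈ P, C s r) : TraceEq C (s :: (P ++ Q)) (P ++ s :: Q) := by
  induction P with
  | nil => exact .refl _
  | cons r P ih =>
    rw [List.forall_mem_cons] at h
    exact (TraceEq.swap _ h.1).trans (.cons r (ih h.2))

theorem append_comm (h : ∀ s ∈ P, ∀ t ∈ Q, C s t) : TraceEq C (P ++ Q) (Q ++ P) := by
  induction P with
  | nil => simpa using TraceEq.refl Q
  | cons s P ih =>
    rw [List.forall_mem_cons] at h
    exact (TraceEq.cons s (ih h.2)).trans (cons_append_of_comm h.1)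

theorem erase [Std.Irrefl C] [DecidableEq A] (s : A) (h : TraceEq C P Q) :
    TraceEq C (P.erase s) (Q.erase s) := by
  induction h with
  | refl P => exact .refl _
  | @cons t P Q h ih =>
    by_cases hts : t = s
    · simpa [hts] using h
    · simpa [hts] using ih.cons t
  | @swap t u P h =>
    have htu : t ≠ u := ne_of_irrefl h
    by_cases hts : t = s
    · subst hts
      simp [htu.symm, TraceEq.refl]
    · by_cases hus : u = s
      · subst hus
        simp [htu, TraceEq.refl]
      · simpa [hts, hus] using TraceEq.swap (P.erase s) h
  | trans _ _ ih ih' => exact ih.trans ih'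

theorem of_cons [Std.Irrefl C] (h : TraceEq C (s :: P) (s :: Q)) : TraceEq C P Q := by
  classical simpa using h.erase s

end TraceEq

/-- Some element `t` of the list satisfies `R s t` and is preceded only by elements commuting
with `s`. For `R` one of `=`, `≤`, `<` this gives the starts of a list and the elements it absorbs
from the left, properly or not. -/
def Reaches (C R : A → A → Prop) (s : A) : List A → Prop
  | [] => False
  | t :: P => R s t ∨ C s t ∧ Reaches C R s P

/-- `s` is a start of `P`: it can be commuted to the front. -/
abbrev IsStart (C : A → A → Prop) (s : A) (P : List A) : Prop := Reaches C (· = ·) s P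

@[simp] theorem not_reaches_nil : ¬ Reaches C R s [] := id

@[simp] theorem reaches_cons : Reaches C R s (t :: P) ↔ R s t ∨ C s t ∧ Reaches C R s P := .rfl

theorem reaches_iff :
    Reaches C R s P ↔ ∃ a b t, P = a ++ t :: b ∧ R s t ∧ ∀ r ∈ a, C s r := by
  induction P with
  | nil => simp
  | cons h P ih =>
    rw [reaches_cons, ih]
    constructor
    · rintro (hR | ⟨hC, a, b, t, rfl, hR, ha⟩)
      · exact ⟨[], P, h, rfl, hR, by simp⟩
      · exact ⟨h :: a, b, t, rfl, hR, List.forall_mem_cons.2 ⟨hC, ha⟩⟩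
    · rintro ⟨_ | ⟨k, a⟩, b, t, hP, hR, ha⟩ <;> obtain ⟨rfl, rfl⟩ := List.cons.inj hP
      · exact .inl hR
      · rw [List.forall_mem_cons] at ha
        exact .inr ⟨ha.1, a, b, t, rfl, hR, ha.2⟩

theorem reaches_append :
    Reaches C R s (P ++ Q) ↔ Reaches C R s P ∨ (∀ r ∈ P, C s r) ∧ Reaches C R s Q := by
  induction P with
  | nil => simp
  | cons t P ih => simp only [List.cons_append, reaches_cons, ih, List.forall_mem_cons]; tauto

theorem Reaches.exists_mem (h : Reaches C R s P) : ∃ t ∈ P, R s t := by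
  obtain ⟨a, b, t, rfl, hst, -⟩ := reaches_iff.1 h
  exact ⟨t, by simp, hst⟩

theorem IsStart.mem (h : IsStart C s P) : s ∈ P := by
  obtain ⟨t, ht, rfl⟩ := h.exists_mem
  exact ht

theorem isStart_of_mem_of_pairwise [Std.Symm C] (hP : P.Pairwise C) (hs : s ∈ P) :
    IsStart C s P := by
  induction P with
  | nil => simp at hs
  | cons t P ih =>
    rw [List.pairwise_cons] at hP
    rcases List.mem_cons.1 hs with rfl | hs
    · exact .inl rfl
    · exact .inr ⟨symm_of C (hP.1 s hs), ih hP.2 hs⟩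

theorem IsStart.exists_traceEq_cons [Std.Symm C] (h : IsStart C s P) :
    ∃ P', TraceEq C P (s :: P') := by
  obtain ⟨a, b, _, rfl, rfl, ha⟩ := reaches_iff.1 h
  exact ⟨a ++ b, (TraceEq.cons_append_of_comm ha).symm⟩

end Traces

section Absorption

variable {A : Type*} {C : A → A → Prop} {s t : A} {P Q P' Q' : List A}

/-- `s` is absorbed by `P` from the left. -/
abbrev IsAbsorbed [LE A] (C : A → A → Prop) (s : A) (P : List A) : Prop := Reaches C (· ≤ ·) s P

/-- `s` is properly absorbed by `P` from the left. -/
abbrev IsProperlyAbsorbed [LT A] (C : A → A → Prop) (s : A) (P : List A) : Prop :=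
  Reaches C (· < ·) s P

variable [LE A]

/-- No element is absorbed across the junction of `P.reverse ++ Q`. -/
def NoCross (C : A → A → Prop) (P Q : List A) : Prop :=
  (∀ s, IsStart C s P → ¬ IsAbsorbed C s Q) ∧ ∀ s, IsStart C s Q → ¬ IsAbsorbed C s P

/-- `P` is reduced: no element of `P` can be commuted next to an element above it. -/
def Reduced (C : A → A → Prop) : List A → Prop
  | [] => True
  | s :: P => Reduced C P ∧ NoCross C [s] P

theorem noCross_nil_right : NoCross C P [] := ⟨by simp, by simp⟩

theorem reduced_cons :
    Reduced C (s :: P) ↔ Reduced C P ∧ ¬ IsAbsorbed C s P ∧ ∀ t, IsStart C t P → ¬ t ≤ s := by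
  simp [Reduced, NoCross]

theorem reduced_reverse_append :
    Reduced C (P.reverse ++ Q) ↔ Reduced C P ∧ Reduced C Q ∧ NoCross C P Q := by
  induction P generalizing Q with
  | nil => simp [Reduced, NoCross]
  | cons s P ih =>
    rw [List.reverse_cons, List.append_assoc, List.singleton_append, ih, reduced_cons,
      reduced_cons]
    simp only [NoCross, reaches_cons]
    grind

theorem reduced_reverse : Reduced C P.reverse ↔ Reduced C P := by
  rw [← List.append_nil P.reverse, reduced_reverse_append]
  simp [Reduced, noCross_nil_right]

theorem reduced_append :
    Reduced C (P ++ Q) ↔ Reduced C P ∧ Reduced C Q ∧ NoCross C P.reverse Q := by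
  rw [← reduced_reverse (P := P), ← reduced_reverse_append, List.reverse_reverse]

/-- `AbsorbsTo C P Q`: the list `P` is transformed into `Q` by swaps of adjacent elements related
by `C` and by deletions of an element next to one above it. -/
inductive AbsorbsTo (C : A → A → Prop) : List A → List A → Prop
  | refl (P : List A) : AbsorbsTo C P P
  | cons (s : A) {P Q : List A} : AbsorbsTo C P Q → AbsorbsTo C (s :: P) (s :: Q)
  | swap {s t : A} (P : List A) : C s t → AbsorbsTo C (s :: t :: P) (t :: s :: P)
  | absorb_left {s t : A} (P : List A) : s ≤ t → AbsorbsTo C (s :: t :: P) (t :: P)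
  | absorb_right {s t : A} (P : List A) : s ≤ t → AbsorbsTo C (t :: s :: P) (t :: P)
  | trans {P P' Q : List A} : AbsorbsTo C P P' → AbsorbsTo C P' Q → AbsorbsTo C P Q

theorem TraceEq.absorbsTo (h : TraceEq C P Q) : AbsorbsTo C P Q := by
  induction h with
  | refl P => exact .refl P
  | cons s _ ih => exact .cons s ih
  | swap P h => exact .swap P h
  | trans _ _ ih ih' => exact ih.trans ih'

namespace AbsorbsTo

theorem append_left (P : List A) (h : AbsorbsTo C Q Q') : AbsorbsTo C (P ++ Q) (P ++ Q') := by
  induction P with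
  | nil => exact h
  | cons s P ih => exact .cons s ih

theorem append_right (Q : List A) (h : AbsorbsTo C P P') : AbsorbsTo C (P ++ Q) (P' ++ Q) := by
  induction h with
  | refl P => exact .refl _
  | cons s _ ih => exact .cons s ih
  | swap P h => exact .swap _ h
  | absorb_left P h => exact .absorb_left _ h
  | absorb_right P h => exact .absorb_right _ h
  | trans _ _ ih ih' => exact ih.trans ih'

theorem reverse [Std.Symm C] (h : AbsorbsTo C P Q) : AbsorbsTo C P.reverse Q.reverse := by
  induction h with
  | refl P => exact .refl _
  | cons s _ ih => simpa using ih.append_right [s]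
  | swap P h => simpa using (AbsorbsTo.swap [] (symm_of C h)).append_left P.reverse
  | absorb_left P h => simpa using (AbsorbsTo.absorb_right [] h).append_left P.reverse
  | absorb_right P h => simpa using (AbsorbsTo.absorb_left [] h).append_left P.reverse
  | trans _ _ ih ih' => exact ih.trans ih'

end AbsorbsTo

theorem IsAbsorbed.absorbsTo (h : IsAbsorbed C s P) : AbsorbsTo C (s :: P) P := by
  induction P with
  | nil => exact h.elim
  | cons t P ih =>
    rcases h with hst | ⟨hst, h⟩
    · exact .absorb_left P hst
    · exact (AbsorbsTo.swap P hst).trans (.cons t (ih h))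

theorem AbsorbsTo.append_of_isAbsorbed (h : ∀ s ∈ P, IsAbsorbed C s Q) :
    AbsorbsTo C (P ++ Q) Q := by
  induction P with
  | nil => exact .refl Q
  | cons s P ih =>
    rw [List.forall_mem_cons] at h
    exact (AbsorbsTo.cons s (ih h.2)).trans h.1.absorbsTo

end Absorption

/-- A commutation relation on a partial order, such as disjointness without edges between the
letters of a graph: what commutes with `t` commutes with everything below `t`. -/
class IsCommutation {A : Type*} [PartialOrder A] (C : A → A → Prop) : Prop
    extends Std.Symm C, Std.Irrefl C where
  mono_left {s t r : A} : s ≤ t → C t r → C s r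

section Commutation

variable {A : Type*} [PartialOrder A] {C R : A → A → Prop} {s t r : A} {P Q P' Q' : List A}

theorem isAbsorbed_iff : IsAbsorbed C s P ↔ IsStart C s P ∨ IsProperlyAbsorbed C s P := by
  induction P with
  | nil => simp
  | cons t P ih => simp only [reaches_cons, ih]; rw [le_iff_eq_or_lt]; tauto

theorem IsStart.isAbsorbed (h : IsStart C s P) : IsAbsorbed C s P := isAbsorbed_iff.2 (.inl h)

theorem IsProperlyAbsorbed.isAbsorbed (h : IsProperlyAbsorbed C s P) : IsAbsorbed C s P :=
  isAbsorbed_iff.2 (.inr h)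

variable [IsCommutation C]

namespace IsCommutation

theorem mono_right (hst : s ≤ t) (h : C r t) : C r s :=
  symm_of C (mono_left hst (symm_of C h))

theorem not_le (h : C s t) : ¬ s ≤ t := fun hst => irrefl_of C s (mono_left hst (symm_of C h))

theorem not_ge (h : C s t) : ¬ t ≤ s := not_le (symm_of C h)

end IsCommutation

open IsCommutation

theorem TraceEq.reaches_iff (hR : ∀ {t}, R s t → s ≤ t) (h : TraceEq C P Q) :
    Reaches C R s P ↔ Reaches C R s Q := by
  induction h with
  | refl P => rfl
  | cons t _ ih => simp only [reaches_cons, ih]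
  | @swap t u P h =>
    have ht : R s t → C s u := fun hst => mono_left (hR hst) h
    have hu : R s u → C s t := fun hsu => mono_left (hR hsu) (symm_of C h)
    simp only [reaches_cons]
    tauto
  | trans _ _ ih ih' => exact ih.trans ih'

theorem TraceEq.isStart_iff (h : TraceEq C P Q) : IsStart C s P ↔ IsStart C s Q :=
  h.reaches_iff le_of_eq

theorem TraceEq.isAbsorbed_iff (h : TraceEq C P Q) : IsAbsorbed C s P ↔ IsAbsorbed C s Q :=
  h.reaches_iff id

theorem TraceEq.isProperlyAbsorbed_iff (h : TraceEq C P Q) :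
    IsProperlyAbsorbed C s P ↔ IsProperlyAbsorbed C s Q :=
  h.reaches_iff le_of_lt

theorem IsAbsorbed.of_le (hst : s ≤ t) (h : IsAbsorbed C t P) : IsAbsorbed C s P := by
  induction P with
  | nil => exact h
  | cons u P ih => exact h.imp hst.trans (And.imp (mono_left hst) ih)

theorem IsStart.rel_or_comm (hR : ∀ {t}, R r t → r ≤ t) (hs : IsStart C s P)
    (hr : Reaches C R r P) : R r s ∨ C r s := by
  induction P with
  | nil => exact hs.elim
  | cons t P ih =>
    rcases hs with rfl | ⟨hst, hs⟩ <;> rcases hr with hrt | ⟨hrt, hr⟩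
    · exact .inl hrt
    · exact .inr hrt
    · exact .inr (mono_left (hR hrt) (symm_of C hst))
    · exact ih hs hr

theorem IsStart.le_or_comm (hs : IsStart C s P) (hr : IsAbsorbed C r P) : r ≤ s ∨ C r s :=
  hs.rel_or_comm id hr

theorem IsStart.lt_or_comm (hs : IsStart C s P) (hr : IsProperlyAbsorbed C r P) :
    r < s ∨ C r s :=
  hs.rel_or_comm le_of_lt hr

theorem IsStart.eq_or_comm (hs : IsStart C s P) (hr : IsStart C r P) : r = s ∨ C r s :=
  hs.rel_or_comm le_of_eq hr

theorem IsStart.not_isProperlyAbsorbed (hs : IsStart C s P) : ¬ IsProperlyAbsorbed C s P :=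
  fun h => (hs.lt_or_comm h).elim (lt_irrefl s) (irrefl_of C s)

theorem exists_traceEq_append_of_isStart {w : List A} (hw : w.Pairwise C)
    (h : ∀ s ∈ w, IsStart C s P) : ∃ P', TraceEq C P (w ++ P') := by
  induction w generalizing P with
  | nil => exact ⟨P, .refl P⟩
  | cons s w ih =>
    rw [List.forall_mem_cons] at h
    rw [List.pairwise_cons] at hw
    obtain ⟨P', hP'⟩ := h.1.exists_traceEq_cons
    obtain ⟨P'', hP''⟩ := ih hw.2 fun t ht => by
      rcases hP'.isStart_iff.1 (h.2 t ht) with rfl | ⟨-, hs⟩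
      · exact absurd (hw.1 t ht) (irrefl_of C t)
      · exact hs
    exact ⟨P'', hP'.trans (.cons s hP'')⟩

theorem initial_segment_unique {p : A → Prop} {x P₁ y Q₁ : List A}
    (h : TraceEq C (x ++ P₁) (y ++ Q₁)) (hx : ∀ s ∈ x, p s) (hP₁ : ∀ s, IsStart C s P₁ → ¬ p s)
    (hy : ∀ s ∈ y, p s) (hQ₁ : ∀ s, IsStart C s Q₁ → ¬ p s) :
    TraceEq C x y ∧ TraceEq C P₁ Q₁ := by
  induction x generalizing y with
  | nil =>
    cases y with
    | nil => exact ⟨.refl [], h⟩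
    | cons s y => exact absurd (hy s (by simp)) (hP₁ s (h.isStart_iff.2 (.inl rfl)))
  | cons s x ih =>
    rw [List.forall_mem_cons] at hx
    rcases reaches_append.1 (h.isStart_iff.1 (.inl rfl)) with hs | ⟨-, hs⟩
    · obtain ⟨y', hy'⟩ := IsStart.exists_traceEq_cons hs
      have hp : ∀ t ∈ y', p t := fun t ht => hy t (hy'.perm.mem_iff.2 (.tail s ht))
      obtain ⟨hxy', hPQ⟩ := ih (h.trans (hy'.append_right Q₁)).of_cons hx.2 hp
      exact ⟨(hxy'.cons s).trans hy'.symm, hPQ⟩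
    · exact absurd hx.1 (hQ₁ s hs)

theorem TraceEq.noCross_iff_right (h : TraceEq C Q Q') : NoCross C P Q ↔ NoCross C P Q' := by
  simp only [NoCross, h.isStart_iff, h.isAbsorbed_iff]

theorem TraceEq.reduced (h : TraceEq C P Q) (hP : Reduced C P) : Reduced C Q := by
  induction h with
  | refl P => exact hP
  | cons s h ih => exact ⟨ih hP.1, h.noCross_iff_right.1 hP.2⟩
  | @swap s t P hst =>
    have hle := not_le hst
    have hge := not_ge hst
    have hcomm : ∀ r, r ≤ s → C r t := fun r hrs => mono_left hrs hst
    simp only [reduced_cons, reaches_cons] at hP ⊢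
    grind [symm_of C hst]
  | trans _ _ ih ih' => exact ih' (ih hP)

/-- A symmetric decomposition of two lists `P` and `Q` facing each other at their starts: reading
`P` backwards, `u = P.reverse` and `v = Q` are decomposed as `u₁ · u' · w` and `w · v' · v₁`, where
`u₁ = P₁.reverse`, `u' = x.reverse`, `v' = y` and `v₁ = Q₁`. -/
structure IsDecomposition (C : A → A → Prop) (P Q w x P₁ y Q₁ : List A) : Prop where
  left : TraceEq C P (w.reverse ++ x ++ P₁)
  right : TraceEq C Q (w ++ y ++ Q₁)
  pairwise : w.Pairwise C
  left_absorbed : ∀ s ∈ x, IsProperlyAbsorbed C s Q₁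
  right_absorbed : ∀ s ∈ y, IsProperlyAbsorbed C s P₁
  comm_left : ∀ s ∈ x, ∀ t ∈ w, C s t
  comm_right : ∀ s ∈ y, ∀ t ∈ w, C s t
  comm : ∀ s ∈ x, ∀ t ∈ y, C s t
  reduced : Reduced C (P₁.reverse ++ w ++ Q₁)

variable {w x P₁ y Q₁ w' x' P₁' y' Q₁' : List A}

namespace IsDecomposition

theorem symm (h : IsDecomposition C P Q w x P₁ y Q₁) :
    IsDecomposition C Q P w.reverse y Q₁ x P₁ where
  left := by simpa using h.right
  right := h.left
  pairwise := List.pairwise_reverse.2 (h.pairwise.imp (symm_of C))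
  left_absorbed := h.right_absorbed
  right_absorbed := h.left_absorbed
  comm_left s hs t ht := h.comm_right s hs t (List.mem_reverse.1 ht)
  comm_right s hs t ht := h.comm_left s hs t (List.mem_reverse.1 ht)
  comm s hs t ht := symm_of C (h.comm t ht s hs)
  reduced := by simpa using reduced_reverse.2 h.reduced

theorem isStart_right (h : IsDecomposition C P Q w x P₁ y Q₁) (hs : s ∈ w) : IsStart C s Q := by
  rw [h.right.isStart_iff, List.append_assoc]
  exact reaches_append.2 (.inl (isStart_of_mem_of_pairwise h.pairwise hs))

theorem isStart_left (h : IsDecomposition C P Q w x P₁ y Q₁) (hs : s ∈ w) : IsStart C s P :=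
  h.symm.isStart_right (List.mem_reverse.2 hs)

theorem isProperlyAbsorbed_right (h : IsDecomposition C P Q w x P₁ y Q₁) (hs : s ∈ x) :
    IsProperlyAbsorbed C s Q := by
  rw [h.right.isProperlyAbsorbed_iff]
  exact reaches_append.2
    (.inr ⟨List.forall_mem_append.2 ⟨h.comm_left s hs, h.comm s hs⟩, h.left_absorbed s hs⟩)

theorem isProperlyAbsorbed_left (h : IsDecomposition C P Q w x P₁ y Q₁) (hs : s ∈ y) :
    IsProperlyAbsorbed C s P :=
  h.symm.isProperlyAbsorbed_right hs

theorem isAbsorbed_right (h : IsDecomposition C P Q w x P₁ y Q₁) (hs : s ∈ w.reverse ++ x) :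
    IsAbsorbed C s Q := by
  rcases List.mem_append.1 hs with hs | hs
  · exact (h.isStart_right (List.mem_reverse.1 hs)).isAbsorbed
  · exact (h.isProperlyAbsorbed_right hs).isAbsorbed

theorem not_isAbsorbed_right (h : IsDecomposition C P Q w x P₁ y Q₁) (hs : IsStart C s P₁) :
    ¬ IsAbsorbed C s Q := by
  rw [h.right.isAbsorbed_iff]
  simp only [List.append_assoc, reaches_append]
  have hred := h.reduced
  rw [List.append_assoc, reduced_reverse_append] at hred
  have hcross := hred.2.2.1 s hs
  simp only [reaches_append, not_or] at hcross
  rintro (hw | ⟨hw, hy | ⟨-, hQ₁⟩⟩)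
  · exact hcross.1 hw
  · obtain ⟨t, ht, hst⟩ := hy.exists_mem
    rcases hs.lt_or_comm (h.right_absorbed t ht) with hts | hts
    · exact hst.not_gt hts
    · exact not_ge hts hst
  · exact hcross.2 ⟨hw, hQ₁⟩

theorem cons_left (h : IsDecomposition C P Q w x P₁ y Q₁) (hP : Reduced C (s :: P))
    (hs : IsProperlyAbsorbed C s Q) (hP' : TraceEq C P' (s :: P)) :
    IsDecomposition C P' Q w (s :: x) P₁ y Q₁ := by
  have not_lt_of_absorbed {t} (ht : IsAbsorbed C t P) : ¬ s < t := fun hst =>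
    (reduced_cons.1 hP).2.1 (ht.of_le hst.le)
  have hsw : ∀ t ∈ w, C s t := fun t ht =>
    ((h.isStart_right ht).lt_or_comm hs).resolve_left
      (not_lt_of_absorbed (h.isStart_left ht).isAbsorbed)
  rw [h.right.isProperlyAbsorbed_iff] at hs
  simp only [reaches_append] at hs
  obtain ⟨hsy, hsQ₁⟩ : (∀ t ∈ y, C s t) ∧ IsProperlyAbsorbed C s Q₁ := by
    rcases hs with (hs | ⟨-, hs⟩) | ⟨hcomm, hs⟩
    · obtain ⟨t, ht, hst⟩ := hs.exists_mem
      exact absurd hst.le (not_le (hsw t ht))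
    · obtain ⟨t, ht, hst⟩ := hs.exists_mem
      exact absurd hst (not_lt_of_absorbed (h.isProperlyAbsorbed_left ht).isAbsorbed)
    · exact ⟨fun t ht => hcomm t (List.mem_append_right w ht), hs⟩
  refine { h with
    left := hP'.trans ((h.left.cons s).trans ?_)
    left_absorbed := List.forall_mem_cons.2 ⟨hsQ₁, h.left_absorbed⟩
    comm_left := List.forall_mem_cons.2 ⟨hsw, h.comm_left⟩
    comm := List.forall_mem_cons.2 ⟨hsy, h.comm⟩ }
  simpa using TraceEq.cons_append_of_comm (Q := x ++ P₁)
    fun t ht => hsw t (List.mem_reverse.1 ht)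

end IsDecomposition

theorem not_isAbsorbed_of_common_starts (hP : Reduced C P) (hw : w.Pairwise C)
    (hmem : ∀ s, s ∈ w ↔ IsStart C s P ∧ IsStart C s Q)
    (hPQ : ∀ s, IsStart C s P → ¬ IsProperlyAbsorbed C s Q)
    (hPw : TraceEq C P (w.reverse ++ P₁)) (hs : IsStart C s P₁) : ¬ IsAbsorbed C s Q := by
  intro hsQ
  have hsw : ∀ t ∈ w, C s t := by
    intro t ht
    refine (((hmem t).1 ht).2.le_or_comm hsQ).resolve_left fun hst => ?_
    have hts := (isStart_of_mem_of_pairwise hw ht).isAbsorbed.of_le hst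
    exact (reduced_reverse_append.1 (hPw.reduced hP)).2.2.2 s hs hts
  have hsP : IsStart C s P := hPw.isStart_iff.2 (reaches_append.2 (.inr ⟨by simpa using hsw, hs⟩))
  have hsQ : IsStart C s Q := (isAbsorbed_iff.1 hsQ).resolve_right (hPQ s hsP)
  exact irrefl_of C s (hsw s ((hmem s).2 ⟨hsP, hsQ⟩))

theorem exists_list_common_starts (C : A → A → Prop) [IsCommutation C] (P Q : List A) :
    ∃ w : List A, w.Pairwise C ∧ ∀ s, s ∈ w ↔ IsStart C s P ∧ IsStart C s Q := by
  classical
  let w := (P.filter fun s => IsStart C s P ∧ IsStart C s Q).dedup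
  have hmem : ∀ s, s ∈ w ↔ IsStart C s P ∧ IsStart C s Q := fun s => by
    simpa [w] using fun hs _ => IsStart.mem hs
  refine ⟨w, (List.nodup_dedup _).pairwise_of_forall_ne fun s hs t ht hst => ?_, hmem⟩
  exact (((hmem t).1 ht).1.eq_or_comm ((hmem s).1 hs).1).resolve_left hst

theorem exists_isDecomposition_of_not_isProperlyAbsorbed (hP : Reduced C P) (hQ : Reduced C Q)
    (hPQ : ∀ s, IsStart C s P → ¬ IsProperlyAbsorbed C s Q)
    (hQP : ∀ s, IsStart C s Q → ¬ IsProperlyAbsorbed C s P) :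
    ∃ w P₁ Q₁, IsDecomposition C P Q w [] P₁ [] Q₁ := by
  obtain ⟨w, hw, hmem⟩ := exists_list_common_starts C P Q
  have hw' : w.reverse.Pairwise C := List.pairwise_reverse.2 (hw.imp (symm_of C))
  obtain ⟨P₁, hP₁⟩ := exists_traceEq_append_of_isStart (P := P) hw'
    fun s hs => ((hmem s).1 (List.mem_reverse.1 hs)).1
  obtain ⟨Q₁, hQ₁⟩ := exists_traceEq_append_of_isStart (P := Q) hw fun s hs => ((hmem s).1 hs).2
  have hredP := hP₁.reduced hP
  have hredQ := hQ₁.reduced hQ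
  have cross_left (s) (hs : IsStart C s P₁) : ¬ IsAbsorbed C s Q :=
    not_isAbsorbed_of_common_starts hP hw hmem hPQ hP₁ hs
  have cross_right (s) (hs : IsStart C s Q₁) : ¬ IsAbsorbed C s P :=
    not_isAbsorbed_of_common_starts hQ hw' (by simpa [and_comm] using hmem) hQP
      (by simpa using hQ₁) hs
  refine ⟨w, P₁, Q₁, ⟨by simpa using hP₁, by simpa using hQ₁, hw, by simp, by simp, by simp,
    by simp, by simp, ?_⟩⟩
  rw [List.append_assoc, reduced_reverse_append]
  refine ⟨(reduced_append.1 hredP).2.1, hredQ, fun s hs => ?_, fun s hs hsP₁ => ?_⟩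
  · rw [← hQ₁.isAbsorbed_iff]
    exact cross_left s hs
  · rcases reaches_append.1 hs with hs | ⟨hsw, hs⟩
    · rw [reduced_reverse_append] at hredP
      exact hredP.2.2.1 s hs hsP₁
    · refine cross_right s hs (hP₁.isAbsorbed_iff.2 (reaches_append.2 (.inr ⟨?_, hsP₁⟩)))
      exact fun t ht => hsw t (List.mem_reverse.1 ht)

theorem exists_isDecomposition (P Q : List A) (hP : Reduced C P) (hQ : Reduced C Q) :
    ∃ w x P₁ y Q₁, IsDecomposition C P Q w x P₁ y Q₁ := by
  by_cases hPQ : ∃ s, IsStart C s P ∧ IsProperlyAbsorbed C s Q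
  · obtain ⟨s, hsP, hsQ⟩ := hPQ
    obtain ⟨P', hP'⟩ := hsP.exists_traceEq_cons
    have hred := hP'.reduced hP
    have : P.length = P'.length + 1 := hP'.perm.length_eq
    obtain ⟨w, x, P₁, y, Q₁, h⟩ := exists_isDecomposition P' Q hred.1 hQ
    exact ⟨w, s :: x, P₁, y, Q₁, h.cons_left hred hsQ hP'⟩
  by_cases hQP : ∃ s, IsStart C s Q ∧ IsProperlyAbsorbed C s P
  · obtain ⟨s, hsQ, hsP⟩ := hQP
    obtain ⟨Q', hQ'⟩ := hsQ.exists_traceEq_cons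
    have hred := hQ'.reduced hQ
    have : Q.length = Q'.length + 1 := hQ'.perm.length_eq
    obtain ⟨w, x, P₁, y, Q₁, h⟩ := exists_isDecomposition P Q' hP hred.1
    exact ⟨_, x, P₁, s :: y, Q₁, (h.symm.cons_left hred hsP hQ').symm⟩
  push Not at hPQ hQP
  obtain ⟨w, P₁, Q₁, h⟩ := exists_isDecomposition_of_not_isProperlyAbsorbed hP hQ hPQ hQP
  exact ⟨w, [], P₁, [], Q₁, h⟩
termination_by P.length + Q.length

theorem IsDecomposition.left_unique (h : IsDecomposition C P Q w x P₁ y Q₁)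
    (h' : IsDecomposition C P Q w' x' P₁' y' Q₁') :
    TraceEq C w w' ∧ TraceEq C x x' ∧ TraceEq C P₁ P₁' := by
  classical
  obtain ⟨hwx, hP₁⟩ := initial_segment_unique (h.left.symm.trans h'.left)
    (fun _ => h.isAbsorbed_right) (fun _ => h.not_isAbsorbed_right)
    (fun _ => h'.isAbsorbed_right) (fun _ => h'.not_isAbsorbed_right)
  have filter_left {w x P₁ y Q₁} (h : IsDecomposition C P Q w x P₁ y Q₁) :
      (w.reverse ++ x).filter (¬ IsProperlyAbsorbed C · Q) = w.reverse := by
    rw [List.filter_append, List.filter_eq_self.2, List.filter_eq_nil_iff.2, List.append_nil]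
    · exact fun s hs => by simpa using h.isProperlyAbsorbed_right hs
    · exact fun s hs => by
        simpa using (h.isStart_right (List.mem_reverse.1 hs)).not_isProperlyAbsorbed
  have filter_right {w x P₁ y Q₁} (h : IsDecomposition C P Q w x P₁ y Q₁) :
      (w.reverse ++ x).filter (IsProperlyAbsorbed C · Q) = x := by
    rw [List.filter_append, List.filter_eq_nil_iff.2, List.filter_eq_self.2, List.nil_append]
    · exact fun s hs => by simpa using h.isProperlyAbsorbed_right hs
    · exact fun s hs => by
        simpa using (h.isStart_right (List.mem_reverse.1 hs)).not_isProperlyAbsorbed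
  have hw := hwx.filter (¬ IsProperlyAbsorbed C · Q)
  have hx := hwx.filter (IsProperlyAbsorbed C · Q)
  rw [filter_left h, filter_left h'] at hw
  rw [filter_right h, filter_right h'] at hx
  exact ⟨by simpa using hw.reverse, hx, hP₁⟩

theorem IsDecomposition.absorbsTo (h : IsDecomposition C P Q w x P₁ y Q₁) :
    AbsorbsTo C (P.reverse ++ Q) (P₁.reverse ++ w ++ Q₁) := by
  have hP : TraceEq C (P.reverse ++ Q) (P₁.reverse ++ ((w.reverse ++ x).reverse ++ Q)) := by
    simpa using h.left.reverse.append_right Q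
  have hQ : TraceEq C Q (y ++ (w ++ Q₁)) := by
    simpa using h.right.trans ((TraceEq.append_comm h.comm_right).symm.append_right Q₁)
  have hx : AbsorbsTo C ((w.reverse ++ x).reverse ++ Q) Q :=
    .append_of_isAbsorbed fun s hs => h.isAbsorbed_right (List.mem_reverse.1 hs)
  have hy : AbsorbsTo C (P₁.reverse ++ y) P₁.reverse := by
    have := AbsorbsTo.append_of_isAbsorbed (P := y.reverse) (Q := P₁) fun s hs =>
      (h.right_absorbed s (List.mem_reverse.1 hs)).isAbsorbed
    simpa using this.reverse
  have hPQ : AbsorbsTo C (P₁.reverse ++ Q) (P₁.reverse ++ w ++ Q₁) := by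
    simpa using (hQ.absorbsTo.append_left P₁.reverse).trans
      (by simpa using hy.append_right (w ++ Q₁))
  exact hP.absorbsTo.trans ((hx.append_left _).trans hPQ)

end Commutation

section Reduct

variable {A : Type*} {C R R' : A → A → Prop} {s t : A} {a a' P Q P' Q' : List A}

/-- `s` satisfies `R s t` for some element `t` of the list, every element before `t` either
commuting with `s` or being absorbed, in this weak sense, by what follows it. Unlike `Reaches`, this
does not change when elements are absorbed, and it agrees with `Reaches` on reduced lists. -/
def WeaklyReaches [LE A] (C : A → A → Prop) : (A → A → Prop) → A → List A → Prop
  | _, _, [] => False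
  | R, s, t :: P => R s t ∨ (C s t ∨ WeaklyReaches C (· ≤ ·) t P) ∧ WeaklyReaches C R s P

theorem weaklyReaches_iff_of_reduced [LE A] (hP : Reduced C P) :
    WeaklyReaches C R s P ↔ Reaches C R s P := by
  induction P generalizing R s with
  | nil => rfl
  | cons t P ih =>
    rw [reduced_cons] at hP
    simp only [WeaklyReaches, reaches_cons, ih hP.1, hP.2.1, or_false]

variable [PartialOrder A]

/-- In `a.reverse ++ s :: P` the middle `s` is redundant: it is absorbed by what follows or properly
absorbed by what precedes. In this way the last of several equal elements is not redundant. -/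
def IsRedundant (C : A → A → Prop) (a : List A) (s : A) (P : List A) : Prop :=
  WeaklyReaches C (· ≤ ·) s P ∨ WeaklyReaches C (· < ·) s a

open Classical in
/-- The elements of `P` that survive in the reduct of `a.reverse ++ P`. -/
noncomputable def survivors (C : A → A → Prop) (a : List A) : List A → List A
  | [] => []
  | s :: P => if IsRedundant C a s P then survivors C (s :: a) P else s :: survivors C (s :: a) P

theorem survivors_cons_congr (hs : IsRedundant C a s P ↔ IsRedundant C a' s P')
    (h : TraceEq C (survivors C (s :: a) P) (survivors C (s :: a') P')) :
    TraceEq C (survivors C a (s :: P)) (survivors C a' (s :: P')) := by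
  classical
  simp only [survivors, hs]
  split_ifs
  · exact h
  · exact h.cons s

theorem survivors_eq_self_of_reduced (h : Reduced C (a.reverse ++ P)) :
    survivors C a P = P := by
  induction P generalizing a with
  | nil => rfl
  | cons s P ih =>
    have hP := (reduced_reverse_append.1 h).2.1
    rw [← List.singleton_append, ← List.append_assoc, ← List.reverse_cons] at h
    have ha := (reduced_reverse_append.1 h).1
    have hs : ¬ IsRedundant C a s P := by
      rw [IsRedundant, weaklyReaches_iff_of_reduced hP.1, weaklyReaches_iff_of_reduced ha.1, not_or]
      exact ⟨(reduced_cons.1 hP).2.1,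
        fun hs => (reduced_cons.1 ha).2.1 (IsProperlyAbsorbed.isAbsorbed hs)⟩
    rw [survivors, if_neg hs, ih h]

variable [IsCommutation C]

open IsCommutation

theorem weaklyReaches_cons_of_comm (hR : ∀ {t}, R s t → s ≤ t) (h : C s t) :
    WeaklyReaches C R s (t :: P) ↔ WeaklyReaches C R s P := by
  have hst : ¬ R s t := fun hst => not_le h (hR hst)
  simp [WeaklyReaches, hst, h]

theorem WeaklyReaches.of_le (hst : s ≤ t) (hR : ∀ {r}, R t r → R' s r)
    (h : WeaklyReaches C R t P) : WeaklyReaches C R' s P := by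
  induction P with
  | nil => exact h
  | cons u P ih => exact h.imp hR (And.imp (Or.imp_left (mono_left hst)) ih)

theorem AbsorbsTo.weaklyReaches_iff (hle : ∀ {s t}, R s t → s ≤ t)
    (htrans : ∀ {s t u}, R s t → t ≤ u → R s u) (h : AbsorbsTo C P Q) :
    WeaklyReaches C R s P ↔ WeaklyReaches C R s Q := by
  induction h generalizing R s with
  | refl P => rfl
  | @cons t P Q _ ih =>
    simp only [WeaklyReaches, ih hle htrans, ih (R := (· ≤ ·)) id le_trans]
  | @swap t u P h =>
    have ht : R s t → C s u := fun hst => mono_left (hle hst) h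
    have hu : R s u → C s t := fun hsu => mono_left (hle hsu) (symm_of C h)
    rw [WeaklyReaches, weaklyReaches_cons_of_comm id h, WeaklyReaches, WeaklyReaches,
      weaklyReaches_cons_of_comm id (symm_of C h), WeaklyReaches]
    tauto
  | @absorb_left t u P h =>
    have ht : R s t → R s u := fun hst => htrans hst h
    simp only [WeaklyReaches, h]
    tauto
  | @absorb_right t u P h =>
    have ht : R s t → R s u := fun hst => htrans hst h
    have hcomm : C s u → C s t := mono_right h
    have hP : WeaklyReaches C (· ≤ ·) u P → WeaklyReaches C (· ≤ ·) t P := .of_le h h.trans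
    simp only [WeaklyReaches]
    grind
  | trans _ _ ih ih' => exact (ih hle htrans).trans (ih' hle htrans)

theorem isRedundant_cons_left_of_comm (h : C s t) :
    IsRedundant C (t :: a) s P ↔ IsRedundant C a s P :=
  or_congr_right (weaklyReaches_cons_of_comm le_of_lt h)

theorem isRedundant_cons_right_of_comm (h : C s t) :
    IsRedundant C a s (t :: P) ↔ IsRedundant C a s P :=
  or_congr_left (weaklyReaches_cons_of_comm id h)

theorem AbsorbsTo.isRedundant_iff_left (h : AbsorbsTo C a a') :
    IsRedundant C a s P ↔ IsRedundant C a' s P :=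
  or_congr_right (h.weaklyReaches_iff le_of_lt lt_of_lt_of_le)

theorem AbsorbsTo.isRedundant_iff_right (h : AbsorbsTo C P Q) :
    IsRedundant C a s P ↔ IsRedundant C a s Q :=
  or_congr_left (h.weaklyReaches_iff id le_trans)

theorem AbsorbsTo.survivors_left (h : AbsorbsTo C a a') (P : List A) :
    TraceEq C (survivors C a P) (survivors C a' P) := by
  induction P generalizing a a' with
  | nil => exact .refl []
  | cons s P ih => exact survivors_cons_congr h.isRedundant_iff_left (ih (h.cons s))

theorem survivors_absorb_left (hst : s ≤ t) (a P : List A) :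
    TraceEq C (survivors C a (s :: t :: P)) (survivors C a (t :: P)) := by
  have ht : IsRedundant C (s :: a) t P ↔ IsRedundant C a t P := or_congr_right
    ⟨fun h => (h.resolve_left hst.not_gt).2,
      fun h => .inr ⟨.inr (h.of_le hst fun htr => (hst.trans_lt htr).le), h⟩⟩
  have hs : IsRedundant C a s (t :: P) := .inl (Or.inl hst)
  rw [survivors, if_pos hs]
  exact survivors_cons_congr ht ((AbsorbsTo.absorb_right a hst).survivors_left P)

theorem survivors_absorb_right (hst : s ≤ t) (a P : List A) :
    TraceEq C (survivors C a (t :: s :: P)) (survivors C a (t :: P)) := by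
  obtain rfl | hlt := hst.eq_or_lt
  · exact survivors_absorb_left le_rfl a P
  have ht : IsRedundant C a t (s :: P) ↔ IsRedundant C a t P := or_congr_left
    ⟨fun h => (h.resolve_left hlt.not_ge).2, fun h => .inr ⟨.inr (h.of_le hst hst.trans), h⟩⟩
  have hs : IsRedundant C (t :: a) s P := .inr (Or.inl hlt)
  refine survivors_cons_congr ht ?_
  rw [survivors, if_pos hs]
  exact (AbsorbsTo.absorb_left a hst).survivors_left P

theorem survivors_swap (hst : C s t) (a P : List A) :
    TraceEq C (survivors C a (s :: t :: P)) (survivors C a (t :: s :: P)) := by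
  classical
  have hts : C t s := symm_of C hst
  have h := (AbsorbsTo.swap a hts).survivors_left P
  simp only [survivors, isRedundant_cons_left_of_comm, isRedundant_cons_right_of_comm, hst, hts]
  split_ifs
  · exact h
  · exact h.cons t
  · exact h.cons s
  · exact (TraceEq.swap _ hst).trans ((h.cons s).cons t)

theorem AbsorbsTo.traceEq_survivors (h : AbsorbsTo C P Q) (a : List A) :
    TraceEq C (survivors C a P) (survivors C a Q) := by
  induction h generalizing a with
  | refl P => exact .refl _
  | cons s h ih => exact survivors_cons_congr h.isRedundant_iff_right (ih (s :: a))
  | swap P h => exact survivors_swap h a P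
  | absorb_left P h => exact survivors_absorb_left h a P
  | absorb_right P h => exact survivors_absorb_right h a P
  | trans _ _ ih ih' => exact (ih a).trans (ih' a)

theorem AbsorbsTo.traceEq_of_reduced (hQ : AbsorbsTo C P Q) (hQ' : AbsorbsTo C P Q')
    (hred : Reduced C Q) (hred' : Reduced C Q') : TraceEq C Q Q' := by
  have h := (hQ.traceEq_survivors []).symm.trans (hQ'.traceEq_survivors [])
  rwa [survivors_eq_self_of_reduced (by simpa using hred),
    survivors_eq_self_of_reduced (by simpa using hred')] at h

end Reduct

section Words

omit [Fintype V]

instance (G : SimpleGraph V) : PartialOrder (Letter G) :=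
  inferInstanceAs (PartialOrder {s : Finset V // IsLetter G s})

instance (G : SimpleGraph V) : IsCommutation (LCommute G) where
  symm s t h := by rwa [LCommute, Finset.union_comm] at h
  irrefl s h := h (by rw [Finset.union_self]; exact s.2)
  mono_left {s t r} hst htr := by
    intro hsr
    apply htr
    have hst : s.1 ⊆ t.1 := hst
    have hunion : t.1 ∪ r.1 = t.1 ∪ (s.1 ∪ r.1) := by
      rw [← Finset.union_assoc, Finset.union_eq_left.2 hst]
    rw [hunion, IsLetter, Finset.coe_union]
    obtain ⟨⟨a, ha⟩⟩ := s.2.nonempty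
    exact SimpleGraph.induce_union_connected t.2.preconnected hsr.preconnected
      ⟨a, hst ha, Finset.mem_union_left _ ha⟩

variable {G : SimpleGraph V} {t : Letter G} {u v : Word G}

theorem wEquiv_iff : WEquiv G u v ↔ TraceEq (LCommute G) u v := by
  constructor
  · intro h
    induction h with
    | refl => exact .refl _
    | tail _ h ih =>
      obtain ⟨a, b, s, t, hst, rfl, rfl⟩ := h
      exact ih.trans ((TraceEq.swap b hst).append_left a)
  · intro h
    induction h with
    | refl => exact .refl
    | cons k _ ih =>
      refine Relation.ReflTransGen.lift (r := LSwapStep G) (p := LSwapStep G) (k :: ·) ?_ _ _ ih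
      rintro _ _ ⟨a, b, s, t, hst, rfl, rfl⟩
      exact ⟨k :: a, b, s, t, hst, rfl, rfl⟩
    | @swap s t P hst => exact .single ⟨[], P, s, t, hst, rfl, rfl⟩
    | trans _ _ ih ih' => exact Relation.ReflTransGen.trans ih ih'

theorem wIsReduced_iff : WIsReduced G u ↔ Reduced (LCommute G) u := by
  rw [WIsReduced]
  induction u with
  | nil => simp [Reduced]
  | cons k u ih =>
    rw [reduced_cons, ← ih]
    constructor
    · refine fun h => ⟨?_, ?_, ?_⟩
      · rintro ⟨a, b, c, s, t, rfl, hst⟩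
        exact h ⟨k :: a, b, c, s, t, rfl, hst⟩
      · intro hk
        obtain ⟨b, c, t, rfl, hkt, hb⟩ := reaches_iff.1 hk
        exact h ⟨[], b, c, k, t, rfl, .inl ⟨hkt, hb⟩⟩
      · intro t ht htk
        obtain ⟨b, c, _, rfl, rfl, hb⟩ := reaches_iff.1 ht
        exact h ⟨[], b, c, k, t, rfl, .inr ⟨htk, hb⟩⟩
    · rintro ⟨h, hk, hk'⟩ ⟨_ | ⟨l, a⟩, b, c, s, t, hu, hst⟩ <;>
        obtain ⟨rfl, rfl⟩ := List.cons.inj hu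
      · rcases hst with ⟨hst, hb⟩ | ⟨hts, hb⟩
        · exact hk (reaches_iff.2 ⟨b, c, t, rfl, hst, hb⟩)
        · exact hk' t (reaches_iff.2 ⟨b, c, t, rfl, rfl, hb⟩) hts
      · exact h ⟨a, b, c, s, t, rfl, hst⟩

theorem letterProperLeftAbsorbed_iff :
    LetterProperLeftAbsorbed G t u ↔ IsProperlyAbsorbed (LCommute G) t u :=
  (reaches_iff (R := (· < ·))).symm

theorem letterProperRightAbsorbed_iff :
    LetterProperRightAbsorbed G t u ↔ IsProperlyAbsorbed (LCommute G) t u.reverse := by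
  rw [← letterProperLeftAbsorbed_iff]
  constructor
  · rintro ⟨a, b, s, rfl, hts, hb⟩
    exact ⟨b.reverse, a.reverse, s, by simp, hts, by simpa using hb⟩
  · rintro ⟨a, b, s, hu, hts, ha⟩
    exact ⟨b.reverse, a.reverse, s, by simpa using congrArg List.reverse hu, hts,
      by simpa using ha⟩

theorem absorbsTo_of_reflTransGen_nsStep (h : Relation.ReflTransGen (NSStep G) u v) :
    AbsorbsTo (LCommute G) u v := by
  induction h with
  | refl => exact .refl u
  | tail _ h ih =>
    refine ih.trans ?_
    rcases h with ⟨a, b, s, t, hst, rfl, rfl⟩ | ⟨a, b, s, t, hst, rfl | rfl, rfl⟩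
    · exact (AbsorbsTo.swap b hst).append_left a
    · exact (AbsorbsTo.absorb_left b hst).append_left a
    · exact (AbsorbsTo.absorb_right b hst).append_left a

theorem isDecomposition_iff {u₁ u' w v' v₁ : Word G} :
    IsDecomposition (LCommute G) u.reverse v w u'.reverse u₁.reverse v' v₁ ↔
      WEquiv G u (u₁ ++ u' ++ w) ∧ WEquiv G v (w ++ v' ++ v₁) ∧ IsCommuting G w ∧
      ProperLeftAbsorbed G u' v₁ ∧ ProperRightAbsorbed G v' u₁ ∧
      WCommute G u' w ∧ WCommute G u' v' ∧ WCommute G w v' ∧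
      WIsReduced G (u₁ ++ w ++ v₁) := by
  have hleft : WEquiv G u (u₁ ++ u' ++ w) ↔
      TraceEq (LCommute G) u.reverse (w.reverse ++ u'.reverse ++ u₁.reverse) := by
    rw [wEquiv_iff]
    exact ⟨fun h => by simpa using h.reverse, fun h => by simpa using h.reverse⟩
  have hcomm : WCommute G w v' ↔ ∀ s ∈ v', ∀ t ∈ w, LCommute G s t :=
    ⟨fun h s hs t ht => symm_of _ (h t ht s hs), fun h s hs t ht => symm_of _ (h t ht s hs)⟩
  rw [hleft, hcomm, wEquiv_iff, wIsReduced_iff]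
  simp only [ProperLeftAbsorbed, letterProperLeftAbsorbed_iff, ProperRightAbsorbed,
    letterProperRightAbsorbed_iff, WCommute, IsCommuting]
  constructor
  · rintro ⟨hu, hv, hw, hu', hv', huw, hvw, huv, hred⟩
    simp only [List.mem_reverse, List.reverse_reverse] at hu' huw huv hred
    exact ⟨hu, hv, hw, hu', hv', huw, huv, hvw, hred⟩
  · rintro ⟨hu, hv, hw, hu', hv', huw, huv, hvw, hred⟩
    refine ⟨hu, hv, hw, ?_, hv', ?_, hvw, ?_, ?_⟩ <;>
      simpa only [List.mem_reverse, List.reverse_reverse]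

theorem symmetric_decomposition_general (G : SimpleGraph V) (u v : Word G)
    (hu : WIsReduced G u) (hv : WIsReduced G v) :
    ∃ u1 u' w v' v1 : Word G,
      WEquiv G u (u1 ++ u' ++ w) ∧ WEquiv G v (w ++ v' ++ v1) ∧
      IsCommuting G w ∧
      ProperLeftAbsorbed G u' v1 ∧ ProperRightAbsorbed G v' u1 ∧
      WCommute G u' w ∧ WCommute G u' v' ∧ WCommute G w v' ∧
      WIsReduced G (u1 ++ w ++ v1) ∧
      (∀ r, NSRed G (u ++ v) r → WEquiv G r (u1 ++ w ++ v1)) ∧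
      (∀ u1' u'' w' v'' v1' : Word G,
        (WEquiv G u (u1' ++ u'' ++ w') ∧ WEquiv G v (w' ++ v'' ++ v1') ∧
         IsCommuting G w' ∧
         ProperLeftAbsorbed G u'' v1' ∧ ProperRightAbsorbed G v'' u1' ∧
         WCommute G u'' w' ∧ WCommute G u'' v'' ∧ WCommute G w' v'' ∧
         WIsReduced G (u1' ++ w' ++ v1')) →
        WEquiv G u1 u1' ∧ WEquiv G u' u'' ∧ WEquiv G w w' ∧
          WEquiv G v' v'' ∧ WEquiv G v1 v1') := by
  obtain ⟨w, x, P₁, v', v₁, h⟩ := exists_isDecomposition u.reverse v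
    (reduced_reverse.2 (wIsReduced_iff.1 hu)) (wIsReduced_iff.1 hv)
  obtain ⟨u', rfl⟩ := List.reverse_surjective x
  obtain ⟨u₁, rfl⟩ := List.reverse_surjective P₁
  obtain ⟨hleft, hright, hw, hu', hv', huw, huv, hwv, hred⟩ := isDecomposition_iff.1 h
  refine ⟨u₁, u', w, v', v₁, hleft, hright, hw, hu', hv', huw, huv, hwv, hred, ?_, ?_⟩
  · rintro r ⟨hr, hrred⟩
    refine wEquiv_iff.2 ((absorbsTo_of_reflTransGen_nsStep hr).traceEq_of_reduced ?_
      (wIsReduced_iff.1 hrred) (wIsReduced_iff.1 hred))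
    simpa using h.absorbsTo
  · intro u₁' u'' w' v'' v₁' h'
    rw [← isDecomposition_iff] at h'
    obtain ⟨hw, hu', hu₁⟩ := h.left_unique h'
    obtain ⟨-, hv', hv₁⟩ := h.symm.left_unique h'.symm
    simp only [wEquiv_iff]
    exact ⟨by simpa using hu₁.reverse, by simpa using hu'.reverse, hw, hv', hv₁⟩

end Words

/-- Symmetric Decomposition Lemma: given reduced words `u` and `v`, there are
decompositions, unique up to permutation, `u ≈ u₁·u'·w` and `v ≈ w·v'·v₁` such
that `w` is commuting, `u'` is properly left-absorbed by `v₁`, `v'` is properly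
right-absorbed by `u₁`, the words `u'`, `w`, `v'` pairwise commute, and
`u₁·w·v₁` is reduced; moreover `[u·v] ≈ u₁·w·v₁`. -/
theorem symmetric_decomposition (G : SimpleGraph V) (u v : Word G)
    (hu : WIsReduced G u) (hv : WIsReduced G v) :
    ∃ u1 u' w v' v1 : Word G,
      WEquiv G u (u1 ++ u' ++ w) ∧ WEquiv G v (w ++ v' ++ v1) ∧
      IsCommuting G w ∧
      ProperLeftAbsorbed G u' v1 ∧ ProperRightAbsorbed G v' u1 ∧
      WCommute G u' w ∧ WCommute G u' v' ∧ WCommute G w v' ∧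
      WIsReduced G (u1 ++ w ++ v1) ∧
      (∀ r, NSRed G (u ++ v) r → WEquiv G r (u1 ++ w ++ v1)) ∧
      (∀ u1' u'' w' v'' v1' : Word G,
        (WEquiv G u (u1' ++ u'' ++ w') ∧ WEquiv G v (w' ++ v'' ++ v1') ∧
         IsCommuting G w' ∧
         ProperLeftAbsorbed G u'' v1' ∧ ProperRightAbsorbed G v'' u1' ∧
         WCommute G u'' w' ∧ WCommute G u'' v'' ∧ WCommute G w' v'' ∧
         WIsReduced G (u1' ++ w' ++ v1')) →
        WEquiv G u1 u1' ∧ WEquiv G u' u'' ∧ WEquiv G w w' ∧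
          WEquiv G v' v'' ∧ WEquiv G v1 v1') :=
  symmetric_decomposition_general G u v hu hv
end
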